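/- arXiv:1505.04751 — 2 statements merged into one kernel-verified Lean document; each statement's English description precedes it below -/
import Mathlib

section
/- Let C be a non-circular component of G such that F(μ) > 0 for every loop μ in C. Then there is a unique β₀ ∈ ℝ such that ρ(A(β₀)^C) = 1; this β₀ is positive, and for every β ∈ ℝ one has ρ(A(β)^C) < 1 if and only if β > β₀. -/
open Filter Finset

/-- The spectral radius of a real matrix, `ρ(M) = lim_n ‖Mⁿ‖^{1/n}`
(computed with the entrywise ℓ¹-norm, and as a `limsup` so that it is always defined;
it is `0` for the matrix over the empty index type). -/
noncomputable def specRad {n : Type*} [Fintype n] [DecidableEq n] (M : Matrix n n ℝ) : ℝ :=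
  Filter.limsup (fun k : ℕ => (∑ i, ∑ j, |(M ^ k) i j|) ^ ((1 : ℝ) / (k : ℝ))) Filter.atTop

/-- The spectral radius `ρ(B^S)` of the submatrix of `B` obtained by restricting to `S × S`. -/
noncomputable def specRadOn {V : Type*} [Fintype V] (B : Matrix V V ℝ) (S : Set V) : ℝ :=
  letI : Fintype S := (Set.toFinite S).fintype
  letI : DecidableEq S := Classical.decEq _
  specRad (fun i j : S => B i.1 j.1)

variable {V E : Type*}

/-- Consecutive edges of the list match up: `r(eᵢ) = s(eᵢ₊₁)`. -/
def ChainOK (src rng : E → V) (μ : List E) : Prop :=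
  List.Chain' (fun e f => rng e = src f) μ

/-- A loop: a nonempty path `μ = e₁⋯eₙ` with `s(e₁) = r(eₙ)`. -/
def IsLoop (src rng : E → V) (μ : List E) : Prop :=
  ∃ h : μ ≠ [], ChainOK src rng μ ∧ src (μ.head h) = rng (μ.getLast h)

/-- A loop lying in the vertex set `C`. -/
def LoopIn (src rng : E → V) (C : Set V) (μ : List E) : Prop :=
  IsLoop src rng μ ∧ ∀ e ∈ μ, src e ∈ C ∧ rng e ∈ C

/-- `v ⤳ w`: there is a (possibly length-0) path from `v` to `w`. -/
def GReaches (src rng : E → V) (v w : V) : Prop :=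
  v = w ∨ ∃ μ : List E, ∃ h : μ ≠ [],
    ChainOK src rng μ ∧ src (μ.head h) = v ∧ rng (μ.getLast h) = w

/-- The closure of a set of vertices: all vertices that reach it. -/
def GClosure (src rng : E → V) (C : Set V) : Set V :=
  {v | ∃ w ∈ C, GReaches src rng v w}

/-- A component: an equivalence class of `v ∼ w` (mutual reachability) containing a loop. -/
def GIsComponent (src rng : E → V) (C : Set V) : Prop :=
  (∃ v, C = {w | GReaches src rng v w ∧ GReaches src rng w v}) ∧
  ∃ μ : List E, LoopIn src rng C μ

/-- The property that the loop `μ` witnesses circularity of the component `C`: `μ` is a simple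
loop visiting every vertex of `C`, and containing every edge of the graph joining vertices
of `C`. -/
def CircularWitness (src rng : E → V) (C : Set V) (μ : List E) : Prop :=
  LoopIn src rng C μ ∧ (μ.map src).Nodup ∧
  (∀ v ∈ C, v ∈ μ.map src) ∧
  (∀ e : E, src e ∈ C → rng e ∈ C → e ∈ μ)

/-- A circular component: a component containing, up to the choice of starting vertex,
exactly one loop. -/
def IsCircular (src rng : E → V) (C : Set V) : Prop :=
  GIsComponent src rng C ∧ ∃ μ : List E, CircularWitness src rng C μ

/-- The matrix `A(β)` with entries `A(β)_{vw} = Σ_{e : v → w} e^{-β F(e)}`. -/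
noncomputable def Amat [Fintype E] [DecidableEq V] (src rng : E → V) (F : E → ℝ) (β : ℝ) :
    Matrix V V ℝ :=
  fun v w => ∑ e ∈ Finset.univ.filter (fun e => src e = v ∧ rng e = w), Real.exp (-β * F e)

/-- `F` extended to paths: `F(e₁⋯eₙ) = F(e₁) + ⋯ + F(eₙ)`. -/
def Fpath (F : E → ℝ) (μ : List E) : ℝ := (μ.map F).sum

/-! As only finitely many loops in `C` are simple, some `c > 0` leaves every simple loop of positive
weight when subtracted from `F`, so shortest simple paths give a potential `φ` with
`c ≤ F e - φ (src e) + φ (rng e)` for all edges `e` in `C`. Conjugating `A(β')^C` by the diagonal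
matrix of the `e^{(β' - β) φ(v)}` then gives `ρ(A(β')^C) ≤ e^{-c (β' - β)} ρ(A(β)^C)` for `β ≤ β'`,
while a crude entrywise comparison shows that `log ρ(A(β)^C)` is Lipschitz in `β`. Finally, `A(0)^C`
counts edges: its row sums are all at least `1`, and a non-circular component has a vertex with two
outgoing edges in `C`, which every vertex of `C` reaches, so `ρ(A(0)^C) > 1`. Thus `ρ` decreases
strictly and continuously from a value above `1` at `β = 0` to `0`, and crosses `1` exactly once. -/

section RealFunctions

theorem exists_crossing_of_strictAnti {X α : Type*} [LinearOrder X] [TopologicalSpace X]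
    [PreconnectedSpace X] [LinearOrder α] [TopologicalSpace α] [OrderClosedTopology α]
    {f : X → α} (hf : StrictAnti f) (hcont : Continuous f) {a b : X} {y : α}
    (ha : y < f a) (hb : f b ≤ y) :
    ∃ x₀, a < x₀ ∧ f x₀ = y ∧ (∀ x, f x = y → x = x₀) ∧ ∀ x, f x < y ↔ x₀ < x := by
  obtain ⟨x₀, rfl⟩ := mem_range_of_exists_le_of_exists_ge hcont ⟨b, hb⟩ ⟨a, ha.le⟩
  exact ⟨x₀, hf.lt_iff_gt.1 ha, rfl, fun _ hx => hf.injective hx, fun _ => hf.lt_iff_gt⟩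

theorem continuous_of_le_exp_dist_mul {X : Type*} [PseudoMetricSpace X] {f : X → ℝ} {K : ℝ}
    (hpos : ∀ x, 0 < f x) (hf : ∀ x y, f x ≤ Real.exp (K * dist x y) * f y) :
    Continuous f := by
  have hlip : LipschitzWith K.toNNReal fun x => Real.log (f x) := by
    refine LipschitzWith.of_le_add_mul' K fun x y => ?_
    calc Real.log (f x) ≤ Real.log (Real.exp (K * dist x y) * f y) :=
          Real.log_le_log (hpos x) (hf x y)
      _ = Real.log (f y) + K * dist x y := by
          rw [Real.log_mul (Real.exp_ne_zero _) (hpos y).ne', Real.log_exp, add_comm]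
  simpa only [Real.exp_log (hpos _)] using hlip.continuous.rexp

theorem strictAnti_of_le_exp_mul {f : ℝ → ℝ} {c : ℝ} (hc : 0 < c) (hpos : ∀ x, 0 < f x)
    (hf : ∀ x y, x ≤ y → f y ≤ Real.exp (-(c * (y - x))) * f x) : StrictAnti f := by
  intro x y hxy
  have hexp : Real.exp (-(c * (y - x))) < 1 :=
    Real.exp_lt_one_iff.2 (neg_neg_of_pos (mul_pos hc (sub_pos.2 hxy)))
  exact (hf x y hxy.le).trans_lt (mul_lt_of_lt_one_left (hpos x) hexp)

theorem exists_crossing_one_of_exp_bounds {f : ℝ → ℝ} {c K : ℝ} (hc : 0 < c) (h0 : 1 < f 0)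
    (hdecay : ∀ x y, x ≤ y → f y ≤ Real.exp (-(c * (y - x))) * f x)
    (hgrowth : ∀ x y, f x ≤ Real.exp (K * dist x y) * f y) :
    ∃ x₀, 0 < x₀ ∧ f x₀ = 1 ∧ (∀ x, f x = 1 → x = x₀) ∧ ∀ x, f x < 1 ↔ x₀ < x := by
  have hpos (x : ℝ) : 0 < f x :=
    pos_of_mul_pos_right ((one_pos.trans h0).trans_le (hgrowth 0 x)) (Real.exp_pos _).le
  have hend : f (Real.log (f 0) / c) ≤ 1 := by
    have h := hdecay 0 (Real.log (f 0) / c) (div_nonneg (Real.log_pos h0).le hc.le)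
    rwa [sub_zero, mul_div_cancel₀ _ hc.ne', Real.exp_neg, Real.exp_log (hpos 0),
      inv_mul_cancel₀ (hpos 0).ne'] at h
  exact exists_crossing_of_strictAnti (strictAnti_of_le_exp_mul hc hpos hdecay)
    (continuous_of_le_exp_dist_mul hpos hgrowth) h0 hend

end RealFunctions

section SpectralRadius

open Matrix Topology

variable {n : Type*} [Fintype n]

/-- The entrywise `ℓ¹`-norm, in terms of which `specRad` is defined. -/
def l1Norm (M : Matrix n n ℝ) : ℝ := ∑ i, ∑ j, |M i j|

theorem l1Norm_nonneg (M : Matrix n n ℝ) : 0 ≤ l1Norm M :=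
  sum_nonneg fun _ _ => sum_nonneg fun _ _ => abs_nonneg _

theorem sum_abs_row_le_l1Norm (M : Matrix n n ℝ) (i : n) : ∑ j, |M i j| ≤ l1Norm M :=
  single_le_sum (f := fun i => ∑ j, |M i j|)
    (fun _ _ => sum_nonneg fun _ _ => abs_nonneg _) (mem_univ i)

theorem l1Norm_mul_le (M N : Matrix n n ℝ) : l1Norm (M * N) ≤ l1Norm M * l1Norm N := by
  calc l1Norm (M * N) ≤ ∑ i, ∑ j, ∑ k, |M i k| * |N k j| := by
        refine sum_le_sum fun i _ => sum_le_sum fun j _ => ?_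
        simpa only [Matrix.mul_apply, abs_mul] using
          abs_sum_le_sum_abs (fun k => M i k * N k j) univ
    _ = ∑ i, ∑ k, |M i k| * ∑ j, |N k j| := by
        simp only [mul_sum]
        exact sum_congr rfl fun _ _ => sum_comm
    _ ≤ ∑ i, ∑ k, |M i k| * l1Norm N := by
        gcongr
        exact sum_abs_row_le_l1Norm N _
    _ = l1Norm M * l1Norm N := by simp only [l1Norm, sum_mul]

theorem mulVec_mono_of_nonneg {M : Matrix n n ℝ} (hM : ∀ i j, 0 ≤ M i j) {x y : n → ℝ}
    (hxy : x ≤ y) : M *ᵥ x ≤ M *ᵥ y :=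
  fun i => dotProduct_le_dotProduct_of_nonneg_left hxy (hM i)

variable [DecidableEq n]

theorem l1Norm_pow_le (M : Matrix n n ℝ) {k : ℕ} (hk : k ≠ 0) :
    l1Norm (M ^ k) ≤ l1Norm M ^ k := by
  obtain ⟨m, rfl⟩ := Nat.exists_eq_succ_of_ne_zero hk
  clear hk
  induction m with
  | zero => simp only [Nat.succ_eq_add_one, zero_add, pow_one, le_refl]
  | succ m ih =>
    rw [pow_succ, pow_succ]
    exact (l1Norm_mul_le _ _).trans (mul_le_mul_of_nonneg_right ih (l1Norm_nonneg _))

theorem isBoundedUnder_l1Norm_pow_root (M : Matrix n n ℝ) :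
    IsBoundedUnder (· ≤ ·) atTop fun k : ℕ => l1Norm (M ^ k) ^ ((1 : ℝ) / k) := by
  refine isBoundedUnder_of_eventually_le (a := l1Norm M) ?_
  filter_upwards [eventually_ne_atTop 0] with k hk
  rw [one_div, Real.rpow_inv_le_iff_of_pos (l1Norm_nonneg _) (l1Norm_nonneg _) (by positivity),
    Real.rpow_natCast]
  exact l1Norm_pow_le M hk

theorem specRad_le_mul_of_l1Norm_pow_le {M N : Matrix n n ℝ} {r D : ℝ} (hr : 0 ≤ r)
    (hD : 0 < D) (h : ∀ k, l1Norm (M ^ k) ≤ D * r ^ k * l1Norm (N ^ k)) :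
    specRad M ≤ r * specRad N := by
  have hDr : Tendsto (fun k : ℕ => D ^ ((1 : ℝ) / k) * r) atTop (𝓝 r) := by
    simpa only [Real.rpow_zero, one_mul, Function.comp_def] using
      ((Real.continuousAt_const_rpow hD.ne').tendsto.comp
        tendsto_one_div_atTop_nhds_zero_nat).mul_const r
  have hDr_nonneg (k : ℕ) : 0 ≤ D ^ ((1 : ℝ) / k) * r := by positivity
  have hN_nonneg (k : ℕ) : 0 ≤ l1Norm (N ^ k) ^ ((1 : ℝ) / k) :=
    Real.rpow_nonneg (l1Norm_nonneg _) _
  have hroot : ∀ᶠ k : ℕ in atTop, l1Norm (M ^ k) ^ ((1 : ℝ) / k) ≤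
      D ^ ((1 : ℝ) / k) * r * l1Norm (N ^ k) ^ ((1 : ℝ) / k) := by
    filter_upwards [eventually_ne_atTop 0] with k hk
    calc l1Norm (M ^ k) ^ ((1 : ℝ) / k)
        ≤ (D * r ^ k * l1Norm (N ^ k)) ^ ((1 : ℝ) / k) :=
          Real.rpow_le_rpow (l1Norm_nonneg _) (h k) (by positivity)
      _ = D ^ ((1 : ℝ) / k) * r * l1Norm (N ^ k) ^ ((1 : ℝ) / k) := by
          rw [Real.mul_rpow (by positivity) (l1Norm_nonneg _), Real.mul_rpow hD.le (by positivity),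
            one_div, Real.pow_rpow_inv_natCast hr hk]
  calc specRad M
      ≤ limsup ((fun k : ℕ => D ^ ((1 : ℝ) / k) * r) *
          fun k : ℕ => l1Norm (N ^ k) ^ ((1 : ℝ) / k)) atTop :=
        limsup_le_limsup hroot
          (isCoboundedUnder_le_of_le atTop fun _ => Real.rpow_nonneg (l1Norm_nonneg _) _)
          (isBoundedUnder_le_mul_of_nonneg (.of_forall hDr_nonneg) hDr.isBoundedUnder_le
            (.of_forall hN_nonneg) (isBoundedUnder_l1Norm_pow_root N))
    _ ≤ limsup (fun k : ℕ => D ^ ((1 : ℝ) / k) * r) atTop * specRad N :=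
        limsup_mul_le (.of_forall hDr_nonneg) hDr.isBoundedUnder_le
          (.of_forall hN_nonneg) (isBoundedUnder_l1Norm_pow_root N)
    _ = r * specRad N := by rw [hDr.limsup_eq]

theorem pow_apply_le_of_apply_le {M N : Matrix n n ℝ} (hM : ∀ i j, 0 ≤ M i j)
    (hN : ∀ i j, 0 ≤ N i j) {r : ℝ} (hr : 0 ≤ r) {d : n → ℝ} (hd : ∀ i, 0 < d i)
    (h : ∀ i j, M i j ≤ r * (d i / d j) * N i j) (k : ℕ) (i j : n) :
    (M ^ k) i j ≤ r ^ k * (d i / d j) * (N ^ k) i j := by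
  induction k generalizing j with
  | zero =>
    rcases eq_or_ne i j with rfl | hij
    · simp [(hd i).ne']
    · simp [hij]
  | succ k ih =>
    simp only [pow_succ _ k, Matrix.mul_apply, mul_sum]
    refine sum_le_sum fun l _ => ?_
    have := hd i
    have := hd l
    have := hd j
    have := pow_apply_nonneg hN k i l
    calc (M ^ k) i l * M l j
        ≤ (r ^ k * (d i / d l) * (N ^ k) i l) * (r * (d l / d j) * N l j) :=
          mul_le_mul (ih l) (h l j) (hM l j) (by positivity)
      _ = r ^ k * r * (d i / d j) * ((N ^ k) i l * N l j) := by field_simp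

theorem specRad_le_mul_of_apply_le {M N : Matrix n n ℝ} (hM : ∀ i j, 0 ≤ M i j)
    (hN : ∀ i j, 0 ≤ N i j) {r : ℝ} (hr : 0 ≤ r) {d : n → ℝ} (hd : ∀ i, 0 < d i)
    (h : ∀ i j, M i j ≤ r * (d i / d j) * N i j) : specRad M ≤ r * specRad N := by
  obtain ⟨D, hD⟩ := Finite.exists_le fun p : n × n => d p.1 / d p.2
  refine specRad_le_mul_of_l1Norm_pow_le hr (lt_max_of_lt_right one_pos : 0 < max D 1) fun k => ?_
  simp only [l1Norm, mul_sum]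
  refine sum_le_sum fun i _ => sum_le_sum fun j _ => ?_
  rw [abs_of_nonneg (pow_apply_nonneg hM k i j), abs_of_nonneg (pow_apply_nonneg hN k i j)]
  refine (pow_apply_le_of_apply_le hM hN hr hd h k i j).trans ?_
  rw [mul_comm (r ^ k)]
  have := pow_apply_nonneg hN k i j
  gcongr
  exact (hD (i, j)).trans (le_max_left D 1)

theorem pow_smul_le_pow_mulVec {M : Matrix n n ℝ} (hM : ∀ i j, 0 ≤ M i j) {r : ℝ} (hr : 0 ≤ r)
    {x : n → ℝ} (hx : r • x ≤ M *ᵥ x) (k : ℕ) : r ^ k • x ≤ M ^ k *ᵥ x := by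
  induction k with
  | zero => simp
  | succ k ih =>
    calc r ^ (k + 1) • x = r ^ k • r • x := by rw [pow_succ, mul_smul]
      _ ≤ r ^ k • (M *ᵥ x) := smul_le_smul_of_nonneg_left hx (by positivity)
      _ = M *ᵥ (r ^ k • x) := (mulVec_smul M _ x).symm
      _ ≤ M *ᵥ (M ^ k *ᵥ x) := mulVec_mono_of_nonneg hM ih
      _ = M ^ (k + 1) *ᵥ x := by rw [mulVec_mulVec, pow_succ']

theorem monotone_pow_mulVec {M : Matrix n n ℝ} (hM : ∀ i j, 0 ≤ M i j) {x : n → ℝ}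
    (hx : x ≤ M *ᵥ x) : Monotone fun k : ℕ => M ^ k *ᵥ x :=
  monotone_nat_of_le_succ fun k => by
    simpa only [mulVec_mulVec, ← pow_succ] using
      mulVec_mono_of_nonneg (fun i j => pow_apply_nonneg hM k i j) hx

theorem rpow_one_div_le_specRad [Nonempty n] {M : Matrix n n ℝ} (hM : ∀ i j, 0 ≤ M i j)
    {r : ℝ} (hr : 0 ≤ r) {N : ℕ} (hN : N ≠ 0) (h : ∀ i, r ≤ (M ^ N *ᵥ 1) i) :
    r ^ ((1 : ℝ) / N) ≤ specRad M := by
  have hpow (k : ℕ) : r ^ k ≤ l1Norm (M ^ (N * k)) := by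
    obtain ⟨i⟩ := ‹Nonempty n›
    have hrow := pow_smul_le_pow_mulVec (x := 1) (fun i j => pow_apply_nonneg hM N i j) hr
      (fun i => by simpa using h i) k i
    rw [← pow_mul] at hrow
    calc r ^ k ≤ ∑ j, (M ^ (N * k)) i j := by simpa [mulVec, dotProduct] using hrow
      _ ≤ ∑ j, |(M ^ (N * k)) i j| := sum_le_sum fun _ _ => le_abs_self _
      _ ≤ l1Norm (M ^ (N * k)) := sum_abs_row_le_l1Norm _ i
  refine le_limsup_of_frequently_le (frequently_atTop.2 fun a => ?_)
    (isBoundedUnder_l1Norm_pow_root M)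
  refine ⟨N * (a + 1), by nlinarith [Nat.pos_of_ne_zero hN], ?_⟩
  calc r ^ ((1 : ℝ) / N) = (r ^ (a + 1)) ^ ((1 : ℝ) / (N * (a + 1) : ℕ)) := by
        rw [← Real.rpow_natCast, ← Real.rpow_mul hr]
        congr 1
        push_cast
        field_simp
    _ ≤ _ := Real.rpow_le_rpow (by positivity) (hpow _) (by positivity)

theorem exists_one_lt_pow_mulVec_one {M : Matrix n n ℝ} (hM : ∀ i j, 0 ≤ M i j)
    (hrow : 1 ≤ M *ᵥ 1) {u v : n} (hv : 1 < (M *ᵥ 1) v)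
    (huv : Relation.ReflTransGen (fun i j => 0 < M i j) u v) :
    ∃ k : ℕ, 1 < (M ^ k *ᵥ 1) u := by
  induction huv using Relation.ReflTransGen.head_induction_on with
  | refl => exact ⟨1, by rwa [pow_one]⟩
  | @head i j hij _ ih =>
    obtain ⟨k, hk⟩ := ih
    have hone : 1 ≤ M ^ k *ᵥ 1 := by
      simpa using monotone_pow_mulVec hM hrow (Nat.zero_le k)
    refine ⟨k + 1, (hrow i).trans_lt ?_⟩
    rw [pow_succ', ← mulVec_mulVec]
    exact sum_lt_sum (fun l _ => mul_le_mul_of_nonneg_left (hone l) (hM i l))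
      ⟨j, mem_univ j, mul_lt_mul_of_pos_left hk hij⟩

theorem one_lt_specRad {M : Matrix n n ℝ} (hM : ∀ i j, 0 ≤ M i j) (hrow : 1 ≤ M *ᵥ 1)
    {v : n} (hv : 1 < (M *ᵥ 1) v)
    (hreach : ∀ u, Relation.ReflTransGen (fun i j => 0 < M i j) u v) : 1 < specRad M := by
  have : Nonempty n := ⟨v⟩
  choose k hk using fun u => exists_one_lt_pow_mulVec_one hM hrow hv (hreach u)
  obtain ⟨N, hN⟩ := Finite.exists_le k
  have hgrow (u : n) : 1 < (M ^ (N + 1) *ᵥ 1) u :=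
    (hk u).trans_le (monotone_pow_mulVec hM hrow ((hN u).trans N.le_succ) u)
  obtain ⟨u, hu⟩ := Finite.exists_min (M ^ (N + 1) *ᵥ 1)
  calc 1 < (M ^ (N + 1) *ᵥ 1) u ^ ((1 : ℝ) / (N + 1 : ℕ)) :=
        Real.one_lt_rpow (hgrow u) (by positivity)
    _ ≤ specRad M := rpow_one_div_le_specRad hM (one_pos.trans (hgrow u)).le N.succ_ne_zero hu

end SpectralRadius

section Walks

variable {V E : Type*} {src rng : E → V} {C : Set V}

/-- The edges of `μ` form a path from `v` to `w` all of whose edges join vertices of `C`. The empty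
path is a walk from any vertex to itself, even one outside `C`. -/
def WalkIn (src rng : E → V) (C : Set V) : V → List E → V → Prop
  | v, [], w => v = w
  | v, e :: μ, w => src e = v ∧ (src e ∈ C ∧ rng e ∈ C) ∧ WalkIn src rng C (rng e) μ w

theorem walkIn_append {v w : V} {μ ν : List E} :
    WalkIn src rng C v (μ ++ ν) w ↔
      ∃ u, WalkIn src rng C v μ u ∧ WalkIn src rng C u ν w := by
  induction μ generalizing v with
  | nil => simp only [List.nil_append, WalkIn, exists_eq_left']
  | cons e μ ih => simp only [List.cons_append, WalkIn, ih, and_assoc, exists_and_left]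

theorem walkIn_iff_of_ne_nil {v w : V} {μ : List E} (hμ : μ ≠ []) :
    WalkIn src rng C v μ w ↔ ChainOK src rng μ ∧ src (μ.head hμ) = v ∧
      rng (μ.getLast hμ) = w ∧ ∀ e ∈ μ, src e ∈ C ∧ rng e ∈ C := by
  induction μ generalizing v with
  | nil => exact absurd rfl hμ
  | cons e μ ih =>
    cases μ with
    | nil =>
      have hchain : ChainOK src rng [e] := List.isChain_singleton e
      simp only [WalkIn, hchain, List.head_cons, List.getLast_singleton, List.forall_mem_singleton,
        true_and]
      tauto
    | cons f μ =>
      have hchain : ChainOK src rng (e :: f :: μ) ↔ rng e = src f ∧ ChainOK src rng (f :: μ) :=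
        List.isChain_cons_cons
      rw [WalkIn, ih (List.cons_ne_nil f μ), hchain, List.forall_mem_cons (a := e), List.head_cons,
        List.head_cons, List.getLast_cons_cons, eq_comm (a := src f)]
      tauto

theorem loopIn_iff_walkIn {μ : List E} :
    LoopIn src rng C μ ↔ μ ≠ [] ∧ ∃ v, WalkIn src rng C v μ v := by
  constructor
  · rintro ⟨⟨hμ, hchain, hclosed⟩, hC⟩
    exact ⟨hμ, _, (walkIn_iff_of_ne_nil hμ).2 ⟨hchain, hclosed, rfl, hC⟩⟩
  · rintro ⟨hμ, v, hwalk⟩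
    obtain ⟨hchain, hsrc, hrng, hC⟩ := (walkIn_iff_of_ne_nil hμ).1 hwalk
    exact ⟨⟨hμ, hchain, hsrc.trans hrng.symm⟩, hC⟩

namespace WalkIn

theorem mem_map_src_or_eq {v w : V} {μ : List E} (h : WalkIn src rng C v μ w) :
    v ∈ μ.map src ∨ v = w := by
  cases μ with
  | nil => exact Or.inr h
  | cons e μ => exact Or.inl (List.mem_cons.2 (Or.inl h.1.symm))

theorem exists_split_of_mem_map_src {v w x : V} {μ : List E} (h : WalkIn src rng C v μ w)
    (hx : x ∈ μ.map src) :
    ∃ μ₁ μ₂, μ = μ₁ ++ μ₂ ∧ x ∉ μ₁.map src ∧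
      WalkIn src rng C v μ₁ x ∧ WalkIn src rng C x μ₂ w := by
  obtain ⟨l₁, l₂, hl, hnotMem⟩ := List.eq_append_cons_of_mem hx
  obtain ⟨μ₁, ν, rfl, rfl, hν⟩ := List.map_eq_append_iff.1 hl
  obtain ⟨e, μ₂, rfl, rfl, -⟩ := List.map_eq_cons_iff.1 hν
  obtain ⟨u, hμ₁, hμ₂⟩ := walkIn_append.1 h
  obtain rfl : src e = u := hμ₂.1
  exact ⟨μ₁, e :: μ₂, rfl, hnotMem, hμ₁, hμ₂⟩

theorem exists_split_loop_of_cons {v w : V} {e : E} {μ : List E}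
    (h : WalkIn src rng C v (e :: μ) w) (hμ : (μ.map src).Nodup)
    (hcons : ¬ ((e :: μ).map src).Nodup) :
    ∃ μ₁ μ₂, μ = μ₁ ++ μ₂ ∧ LoopIn src rng C (e :: μ₁) ∧ ((e :: μ₁).map src).Nodup ∧
      WalkIn src rng C v μ₂ w := by
  obtain ⟨rfl, heC, hwalk⟩ := h
  have hmem : src e ∈ μ.map src := by
    by_contra hnotMem
    exact hcons (List.nodup_cons.2 ⟨hnotMem, hμ⟩)
  obtain ⟨μ₁, μ₂, rfl, hnotMem, hμ₁, hμ₂⟩ := hwalk.exists_split_of_mem_map_src hmem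
  rw [List.map_append] at hμ
  exact ⟨μ₁, μ₂, rfl, loopIn_iff_walkIn.2 ⟨List.cons_ne_nil _ _, src e, rfl, heC, hμ₁⟩,
    List.nodup_cons.2 ⟨hnotMem, hμ.of_append_left⟩, hμ₂⟩

theorem exists_simple_loop {v w : V} {μ : List E} (h : WalkIn src rng C v μ w)
    (hμ : ¬ (μ.map src).Nodup) : ∃ ν, LoopIn src rng C ν ∧ (ν.map src).Nodup := by
  induction μ generalizing v with
  | nil => exact absurd List.nodup_nil hμ
  | cons e μ ih =>
    by_cases htail : (μ.map src).Nodup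
    · obtain ⟨μ₁, -, -, hloop, hnodup, -⟩ := h.exists_split_loop_of_cons htail hμ
      exact ⟨e :: μ₁, hloop, hnodup⟩
    · exact ih h.2.2 htail

end WalkIn

namespace LoopIn

theorem exists_simple {μ : List E} (h : LoopIn src rng C μ) :
    ∃ ν, LoopIn src rng C ν ∧ (ν.map src).Nodup := by
  by_cases hμ : (μ.map src).Nodup
  · exact ⟨μ, h, hμ⟩
  · obtain ⟨-, v, hwalk⟩ := loopIn_iff_walkIn.1 h
    exact hwalk.exists_simple_loop hμ

theorem rng_mem_map_src {μ : List E} (h : LoopIn src rng C μ) {e : E} (he : e ∈ μ) :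
    rng e ∈ μ.map src := by
  obtain ⟨hμ, v, hwalk⟩ := loopIn_iff_walkIn.1 h
  have hv : v ∈ μ.map src := by
    obtain ⟨-, rfl, -, -⟩ := (walkIn_iff_of_ne_nil hμ).1 hwalk
    exact List.mem_map_of_mem (List.head_mem hμ)
  obtain ⟨μ₁, μ₂, rfl⟩ := List.append_of_mem he
  obtain ⟨u, -, -, -, hμ₂⟩ := walkIn_append.1 hwalk
  rcases hμ₂.mem_map_src_or_eq with hmem | rfl
  · rw [List.map_append, List.map_cons]
    exact List.mem_append_right _ (List.mem_cons_of_mem _ hmem)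
  · exact hv

end LoopIn

end Walks

section Components

open Relation

variable {V E : Type*} {src rng : E → V} {C : Set V}

/-- `v` and `w` are joined by an edge from `v` to `w`: the one-step version of `GReaches`. -/
def GAdj (src rng : E → V) (v w : V) : Prop := ∃ e, src e = v ∧ rng e = w

theorem gReaches_iff_walkIn_univ {v w : V} :
    GReaches src rng v w ↔ ∃ μ, WalkIn src rng Set.univ v μ w := by
  constructor
  · rintro (rfl | ⟨μ, hμ, hchain, hsrc, hrng⟩)
    · exact ⟨[], rfl⟩
    · exact ⟨μ, (walkIn_iff_of_ne_nil hμ).2 ⟨hchain, hsrc, hrng, fun _ _ => ⟨trivial, trivial⟩⟩⟩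
  · rintro ⟨μ, hwalk⟩
    rcases eq_or_ne μ [] with rfl | hμ
    · exact Or.inl hwalk
    · obtain ⟨hchain, hsrc, hrng, -⟩ := (walkIn_iff_of_ne_nil hμ).1 hwalk
      exact Or.inr ⟨μ, hμ, hchain, hsrc, hrng⟩

theorem gReaches_iff_reflTransGen {v w : V} :
    GReaches src rng v w ↔ ReflTransGen (GAdj src rng) v w := by
  rw [gReaches_iff_walkIn_univ]
  constructor
  · rintro ⟨μ, hwalk⟩
    induction μ generalizing v with
    | nil =>
      obtain rfl : v = w := hwalk
      exact ReflTransGen.refl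
    | cons e μ ih => exact ReflTransGen.head ⟨e, hwalk.1, rfl⟩ (ih hwalk.2.2)
  · intro h
    induction h using ReflTransGen.head_induction_on with
    | refl => exact ⟨[], rfl⟩
    | head hadj _ ih =>
      obtain ⟨e, rfl, rfl⟩ := hadj
      obtain ⟨μ, hwalk⟩ := ih
      exact ⟨e :: μ, rfl, ⟨trivial, trivial⟩, hwalk⟩

namespace GIsComponent

theorem reflTransGen (hC : GIsComponent src rng C) (u w : C) :
    ReflTransGen (fun i j : C => GAdj src rng i j) u w := by
  obtain ⟨⟨v₀, rfl⟩, -⟩ := hC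
  obtain ⟨u, hu⟩ := u
  have huw : ReflTransGen (GAdj src rng) u w :=
    (gReaches_iff_reflTransGen.1 hu.2).trans (gReaches_iff_reflTransGen.1 w.2.1)
  induction huw using ReflTransGen.head_induction_on with
  | refl => exact ReflTransGen.refl
  | head hadj hrest ih =>
    exact ReflTransGen.head hadj (ih
      ⟨gReaches_iff_reflTransGen.2 ((gReaches_iff_reflTransGen.1 hu.1).tail hadj),
        gReaches_iff_reflTransGen.2 (hrest.trans (gReaches_iff_reflTransGen.1 w.2.2))⟩)

theorem exists_edge_from (hC : GIsComponent src rng C) {v : V} (hv : v ∈ C) :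
    ∃ e, src e = v ∧ rng e ∈ C := by
  obtain ⟨μ, ⟨hμ, -⟩, hmem⟩ := hC.2
  have hhead := hmem _ (List.head_mem hμ)
  rcases (hC.reflTransGen ⟨v, hv⟩ ⟨_, hhead.1⟩).cases_head with heq | ⟨w, ⟨e, he, hrng⟩, -⟩
  · exact ⟨μ.head hμ, congrArg Subtype.val heq.symm, hhead.2⟩
  · exact ⟨e, he, hrng ▸ w.2⟩

theorem subset_of_forall_edge (hC : GIsComponent src rng C) {S : Set V} {v : V} (hvC : v ∈ C)
    (hvS : v ∈ S) (hS : ∀ e, src e ∈ S → rng e ∈ C → rng e ∈ S) : C ⊆ S := by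
  have hmem (w : C) (h : ReflTransGen (fun i j : C => GAdj src rng i j) ⟨v, hvC⟩ w) :
      (w : V) ∈ S := by
    induction h with
    | refl => exact hvS
    | @tail _ w _ hadj ih =>
      obtain ⟨e, he, hrng⟩ := hadj
      exact hrng ▸ hS e (he ▸ ih) (hrng ▸ w.2)
  exact fun w hw => hmem ⟨w, hw⟩ (hC.reflTransGen _ _)

theorem isCircular_of_unique_edge (hC : GIsComponent src rng C)
    (huniq : ∀ e f, src e = src f → src e ∈ C → rng e ∈ C → rng f ∈ C → e = f) :
    IsCircular src rng C := by
  obtain ⟨μ, hμ⟩ := hC.2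
  obtain ⟨ν, hν, hnodup⟩ := hμ.exists_simple
  have hedge : ∀ e, src e ∈ ν.map src → rng e ∈ C → e ∈ ν := by
    intro e he hrng
    obtain ⟨f, hf, hfe⟩ := List.mem_map.1 he
    rwa [← huniq f e hfe (hν.2 f hf).1 (hν.2 f hf).2 hrng]
  obtain ⟨hne, -⟩ := hν.1
  have hhead := List.head_mem hne
  have hcover : C ⊆ {v | v ∈ ν.map src} :=
    hC.subset_of_forall_edge (hν.2 _ hhead).1 (List.mem_map_of_mem hhead)
      fun e he hrng => hν.rng_mem_map_src (hedge e he hrng)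
  exact ⟨hC, ν, hν, hnodup, hcover, fun e hsrc hrng => hedge e (hcover hsrc) hrng⟩

end GIsComponent

end Components

section Potential

open Topology

variable {V E : Type*} {src rng : E → V} {C : Set V}

theorem finite_setOf_nodup_map [Finite E] (f : E → V) : {μ : List E | (μ.map f).Nodup}.Finite := by
  have := Fintype.ofFinite E
  classical
  have hnodup : {μ : List E | μ.Nodup}.Finite := Finite.of_fintype {μ : List E // μ.Nodup}
  exact hnodup.subset fun _ hμ => List.Nodup.of_map f hμ

theorem exists_potential_of_simple_loops_nonneg [Finite E] (F : E → ℝ)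
    (hF : ∀ μ, LoopIn src rng C μ → (μ.map src).Nodup → 0 ≤ Fpath F μ) :
    ∃ φ : V → ℝ, ∀ e, src e ∈ C → rng e ∈ C → φ (src e) ≤ F e + φ (rng e) := by
  have hshortest (v : V) : ∃ μ, ((∃ w, WalkIn src rng C v μ w) ∧ (μ.map src).Nodup) ∧
      ∀ ν, (∃ w, WalkIn src rng C v ν w) ∧ (ν.map src).Nodup → Fpath F μ ≤ Fpath F ν :=
    Set.exists_min_image {μ | (∃ w, WalkIn src rng C v μ w) ∧ (μ.map src).Nodup} (Fpath F)
      ((finite_setOf_nodup_map src).subset fun _ hμ => hμ.2) ⟨[], ⟨v, rfl⟩, List.nodup_nil⟩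
  choose p hp hmin using hshortest
  refine ⟨fun v => Fpath F (p v), fun e hsrc hrng => ?_⟩
  obtain ⟨⟨w, hw⟩, hnodup⟩ := hp (rng e)
  have hwalk : WalkIn src rng C (src e) (e :: p (rng e)) w := ⟨rfl, ⟨hsrc, hrng⟩, hw⟩
  suffices Fpath F (p (src e)) ≤ Fpath F (e :: p (rng e)) by
    simpa only [Fpath, List.map_cons, List.sum_cons] using this
  by_cases hcons : ((e :: p (rng e)).map src).Nodup
  · exact hmin _ _ ⟨⟨w, hwalk⟩, hcons⟩
  · obtain ⟨μ₁, μ₂, hsplit, hloop, hloop_nodup, hμ₂⟩ :=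
      hwalk.exists_split_loop_of_cons hnodup hcons
    rw [hsplit, List.map_append] at hnodup
    calc Fpath F (p (src e)) ≤ Fpath F μ₂ := hmin _ _ ⟨⟨w, hμ₂⟩, hnodup.of_append_right⟩
      _ ≤ Fpath F (e :: μ₁) + Fpath F μ₂ := le_add_of_nonneg_left (hF _ hloop hloop_nodup)
      _ = Fpath F (e :: p (rng e)) := by
        simp only [Fpath, hsplit, ← List.cons_append, List.map_append, List.sum_append]

theorem exists_potential_of_loops_pos [Finite E] {F : E → ℝ}
    (hF : ∀ μ, LoopIn src rng C μ → 0 < Fpath F μ) :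
    ∃ c : ℝ, 0 < c ∧ ∃ φ : V → ℝ,
      ∀ e, src e ∈ C → rng e ∈ C → c ≤ F e - φ (src e) + φ (rng e) := by
  have hpos (μ : List E) (hμ : LoopIn src rng C μ) :
      ∀ᶠ c in 𝓝[>] (0 : ℝ), 0 < Fpath (fun e => F e - c) μ := by
    have hcont : Continuous fun c : ℝ => Fpath (fun e => F e - c) μ :=
      continuous_list_sum μ fun e _ => continuous_const.sub continuous_id
    refine nhdsWithin_le_nhds (hcont.tendsto 0 |>.eventually_const_lt ?_)
    simpa only [sub_zero] using hF μ hμ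
  have hsimple : {μ | LoopIn src rng C μ ∧ (μ.map src).Nodup}.Finite :=
    (finite_setOf_nodup_map src).subset fun _ hμ => hμ.2
  obtain ⟨c, hloops, hc⟩ :=
    ((hsimple.eventually_all.2 fun μ hμ => hpos μ hμ.1).and self_mem_nhdsWithin).exists
  obtain ⟨φ, hφ⟩ := exists_potential_of_simple_loops_nonneg (src := src) (rng := rng) (C := C)
    (fun e => F e - c) fun μ hμ hnodup => (hloops μ ⟨hμ, hnodup⟩).le
  exact ⟨c, hc, φ, fun e hsrc hrng => by linarith [hφ e hsrc hrng]⟩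

end Potential

section WeightedAdjacency

open Matrix Relation

variable {V E : Type*}

theorem specRadOn_eq_specRad_submatrix [Fintype V] (B : Matrix V V ℝ) (S : Set V) [Fintype S]
    [DecidableEq S] : specRadOn B S = specRad (B.submatrix ((↑) : S → V) (↑)) := by
  obtain rfl : ‹Fintype S› = (Set.toFinite S).fintype := Subsingleton.elim _ _
  obtain rfl : ‹DecidableEq S› = Classical.decEq S := Subsingleton.elim _ _
  rfl

variable [DecidableEq V] [Fintype E] {src rng : E → V} {F : E → ℝ} {C : Set V}

theorem Amat_nonneg (β : ℝ) (v w : V) : 0 ≤ Amat src rng F β v w :=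
  sum_nonneg fun _ _ => (Real.exp_pos _).le

theorem Amat_pos_of_gAdj {β : ℝ} {v w : V} (h : GAdj src rng v w) :
    0 < Amat src rng F β v w := by
  obtain ⟨e, rfl, rfl⟩ := h
  exact sum_pos (fun _ _ => Real.exp_pos _) ⟨e, by simp⟩

theorem Amat_zero_submatrix_mulVec_one [Fintype C] (v : C) :
    ((Amat src rng F 0).submatrix (↑) (↑) *ᵥ (1 : C → ℝ)) v =
      {e | src e = v ∧ rng e ∈ C}.ncard := by
  classical
  have hfiber : #{e | src e = v ∧ rng e ∈ C} =
      ∑ w ∈ C.toFinset, #{e | src e = v ∧ rng e = w} := by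
    rw [card_eq_sum_card_fiberwise (f := rng) (t := C.toFinset) fun e he => by simp_all]
    refine sum_congr rfl fun w hw => congrArg card ?_
    ext e
    simp_all
  rw [Set.ncard_eq_toFinset_card', Set.toFinset_ofPred, hfiber, ← sum_set_coe]
  simp [mulVec, dotProduct, Amat]

variable [Fintype V]

theorem specRadOn_Amat_le_exp_mul {β β' κ : ℝ} (φ : V → ℝ)
    (h : ∀ e, src e ∈ C → rng e ∈ C → κ ≤ (β' - β) * (F e - φ (src e) + φ (rng e))) :
    specRadOn (Amat src rng F β') C ≤ Real.exp (-κ) * specRadOn (Amat src rng F β) C := by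
  classical
  rw [specRadOn_eq_specRad_submatrix, specRadOn_eq_specRad_submatrix]
  refine specRad_le_mul_of_apply_le (fun _ _ => Amat_nonneg _ _ _) (fun _ _ => Amat_nonneg _ _ _)
    (Real.exp_pos _).le (d := fun i => Real.exp (-((β' - β) * φ i))) (fun _ => Real.exp_pos _) ?_
  rintro ⟨v, hv⟩ ⟨w, hw⟩
  simp only [Amat, mul_sum]
  refine sum_le_sum fun e he => ?_
  obtain ⟨-, rfl, rfl⟩ := mem_filter.1 he
  rw [← Real.exp_sub, ← Real.exp_add, ← Real.exp_add, Real.exp_le_exp]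
  linarith [h e hv hw]

theorem specRadOn_Amat_le_exp_dist_mul (β β' : ℝ) :
    specRadOn (Amat src rng F β) C ≤
      Real.exp ((∑ e, |F e|) * dist β β') * specRadOn (Amat src rng F β') C := by
  rw [← neg_neg ((∑ e, |F e|) * dist β β')]
  refine specRadOn_Amat_le_exp_mul 0 fun e _ _ => ?_
  have hle : |F e| ≤ ∑ e, |F e| :=
    single_le_sum (f := fun e => |F e|) (fun _ _ => abs_nonneg _) (mem_univ e)
  calc -((∑ e, |F e|) * dist β β') ≤ -(|F e| * |β - β'|) := by
        rw [Real.dist_eq]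
        gcongr
    _ ≤ (β - β') * F e := by
        rw [← abs_mul, mul_comm (F e)]
        exact neg_abs_le _
    _ = (β - β') * (F e - (0 : V → ℝ) (src e) + (0 : V → ℝ) (rng e)) := by simp

theorem one_lt_specRadOn_Amat_zero (hC : GIsComponent src rng C)
    (hnc : ¬ IsCircular src rng C) : 1 < specRadOn (Amat src rng F 0) C := by
  classical
  obtain ⟨e, f, hsrc, heC, hre, hrf, hne⟩ : ∃ e f, src e = src f ∧ src e ∈ C ∧ rng e ∈ C ∧
      rng f ∈ C ∧ e ≠ f := by
    by_contra! huniq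
    exact hnc (hC.isCircular_of_unique_edge huniq)
  rw [specRadOn_eq_specRad_submatrix]
  refine one_lt_specRad (fun _ _ => Amat_nonneg _ _ _) (fun u => ?_) (v := ⟨src e, heC⟩) ?_
    fun u => ReflTransGen.mono (fun _ _ => Amat_pos_of_gAdj) _ _ (hC.reflTransGen u _)
  · obtain ⟨g, hg⟩ := hC.exists_edge_from u.2
    rw [Amat_zero_submatrix_mulVec_one, Pi.one_apply, Nat.one_le_cast, Nat.one_le_iff_ne_zero]
    exact Set.ncard_ne_zero_of_mem (a := g) hg
  · rw [Amat_zero_submatrix_mulVec_one, Nat.one_lt_cast, Set.one_lt_ncard]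
    exact ⟨e, ⟨rfl, hre⟩, f, ⟨hsrc.symm, hrf⟩, hne⟩

end WeightedAdjacency

/-- For a non-circular component `C` all of whose loops satisfy `F(μ) > 0`, there is a
unique `β₀` with `ρ(A(β₀)^C) = 1`; it is positive, and `ρ(A(β)^C) < 1 ↔ β > β₀`. -/
theorem specRad_component_pos_type {V E : Type*} [Fintype V] [DecidableEq V] [Fintype E]
    (src rng : E → V) (F : E → ℝ)
    (C : Set V) (hC : GIsComponent src rng C) (hnc : ¬ IsCircular src rng C)
    (hF : ∀ μ : List E, LoopIn src rng C μ → 0 < Fpath F μ) :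
    ∃ β₀ : ℝ, 0 < β₀ ∧ specRadOn (Amat src rng F β₀) C = 1 ∧
      (∀ β : ℝ, specRadOn (Amat src rng F β) C = 1 → β = β₀) ∧
      (∀ β : ℝ, specRadOn (Amat src rng F β) C < 1 ↔ β₀ < β) := by
  obtain ⟨c, hc, φ, hφ⟩ := exists_potential_of_loops_pos hF
  have hdecay (β β' : ℝ) (hβ : β ≤ β') : specRadOn (Amat src rng F β') C ≤
      Real.exp (-(c * (β' - β))) * specRadOn (Amat src rng F β) C := by
    refine specRadOn_Amat_le_exp_mul φ fun e hsrc hrng => ?_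
    rw [mul_comm]
    exact mul_le_mul_of_nonneg_left (hφ e hsrc hrng) (sub_nonneg.2 hβ)
  exact exists_crossing_one_of_exp_bounds hc (one_lt_specRadOn_Amat_zero hC hnc) hdecay
    specRadOn_Amat_le_exp_dist_mul
end

section
/- Let C be a non-circular component of G such that F(μ) < 0 for every loop μ in C. Then there is a unique β₀ ∈ ℝ such that ρ(A(β₀)^C) = 1; this β₀ is negative, and for every β ∈ ℝ one has ρ(A(β)^C) < 1 if and only if β < β₀. -/
open Filter Finset

variable {V E : Type*}

/-!
The entries of `A(β) ^ k` are sums of `exp (-β F(μ))` over the walks `μ` of length `k`. Only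
finitely many loops in `C` are simple and all of them are negative, so cutting simple loops out of
a walk one after the other gives constants `c > 0` and `B` with `F(μ) ≤ B - c |μ|` for every walk
`μ` in `C`; trivially also `F(μ) ≥ K |μ|` with `K = min F`. Summing over walks, these bounds become
`exp (c (β' - β)) ρ(β) ≤ ρ(β') ≤ exp (-K (β' - β)) ρ(β)` for `β ≤ β'`, so `log ρ` is a strictly
increasing bijection of `ℝ`. If `C` is not circular, two edges of `C` have the same source; they
extend to two distinct closed walks of equal length at that vertex, so a power of `A(0)^C` has a
diagonal entry at least `2`. Hence `ρ(A(0)^C) > 1` and the crossing of the level `1` is negative.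
-/

section SpectralRadius

variable {l m n : Type*} [Fintype l] [Fintype m] [Fintype n]

/-- The entrywise `ℓ¹`-norm of a matrix, in terms of which `specRad` is defined. -/
noncomputable def entryNorm (M : Matrix m n ℝ) : ℝ := ∑ i, ∑ j, |M i j|

theorem entryNorm_nonneg (M : Matrix m n ℝ) : 0 ≤ entryNorm M :=
  sum_nonneg fun _ _ => sum_nonneg fun _ _ => abs_nonneg _

theorem row_abs_sum_le_entryNorm (M : Matrix m n ℝ) (i : m) : ∑ j, |M i j| ≤ entryNorm M :=
  single_le_sum (f := fun i => ∑ j, |M i j|) (fun _ _ => sum_nonneg fun _ _ => abs_nonneg _)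
    (mem_univ i)

theorem abs_apply_le_entryNorm (M : Matrix m n ℝ) (i : m) (j : n) : |M i j| ≤ entryNorm M :=
  (single_le_sum (f := fun j => |M i j|) (fun _ _ => abs_nonneg _) (mem_univ j)).trans
    (row_abs_sum_le_entryNorm M i)

theorem entryNorm_mul_le (A : Matrix l m ℝ) (B : Matrix m n ℝ) :
    entryNorm (A * B) ≤ entryNorm A * entryNorm B := by
  have row_le (i : l) : ∑ j, |(A * B) i j| ≤ (∑ k, |A i k|) * entryNorm B :=
    calc ∑ j, |(A * B) i j|
        ≤ ∑ j, ∑ k, |A i k| * |B k j| := by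
          simp only [Matrix.mul_apply, ← abs_mul]
          exact sum_le_sum fun j _ => abs_sum_le_sum_abs _ _
      _ = ∑ k, |A i k| * ∑ j, |B k j| := by
          rw [sum_comm]
          simp only [mul_sum]
      _ ≤ ∑ k, |A i k| * entryNorm B := by
          gcongr with k
          exact row_abs_sum_le_entryNorm B k
      _ = (∑ k, |A i k|) * entryNorm B := (sum_mul ..).symm
  calc entryNorm (A * B)
      ≤ ∑ i, (∑ k, |A i k|) * entryNorm B := sum_le_sum fun i _ => row_le i
    _ = entryNorm A * entryNorm B := (sum_mul ..).symm

variable [DecidableEq n]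

theorem entryNorm_pow_le (A : Matrix n n ℝ) {k : ℕ} (hk : k ≠ 0) :
    entryNorm (A ^ k) ≤ entryNorm A ^ k := by
  induction k, Nat.one_le_iff_ne_zero.2 hk using Nat.le_induction with
  | base => simp only [pow_one, le_refl]
  | succ k hk ih =>
    rw [pow_succ, pow_succ]
    exact (entryNorm_mul_le _ _).trans
      (mul_le_mul_of_nonneg_right (ih (by lia)) (entryNorm_nonneg A))

theorem isBoundedUnder_entryNorm_pow_rpow (A : Matrix n n ℝ) :
    IsBoundedUnder (· ≤ ·) atTop fun k : ℕ => entryNorm (A ^ k) ^ ((1 : ℝ) / k) := by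
  refine isBoundedUnder_of_eventually_le (a := entryNorm A) ?_
  filter_upwards [eventually_ne_atTop 0] with k hk
  calc entryNorm (A ^ k) ^ ((1 : ℝ) / k)
      ≤ (entryNorm A ^ k) ^ ((1 : ℝ) / k) :=
        Real.rpow_le_rpow (entryNorm_nonneg _) (entryNorm_pow_le A hk) (by positivity)
    _ = entryNorm A := by rw [one_div, Real.pow_rpow_inv_natCast (entryNorm_nonneg A) hk]

theorem mul_specRad_le {A B : Matrix n n ℝ} {C q : ℝ} (hC : 0 < C) (hq : 0 ≤ q)
    (h : ∀ k : ℕ, C * q ^ k * entryNorm (A ^ k) ≤ entryNorm (B ^ k)) :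
    q * specRad A ≤ specRad B := by
  set u : ℕ → ℝ := fun k => entryNorm (A ^ k) ^ ((1 : ℝ) / k)
  set v : ℕ → ℝ := fun k => C ^ ((1 : ℝ) / k) * q
  have u_nonneg (k : ℕ) : 0 ≤ u k := Real.rpow_nonneg (entryNorm_nonneg _) _
  have v_nonneg (k : ℕ) : 0 ≤ v k := mul_nonneg (Real.rpow_nonneg hC.le _) hq
  have v_tendsto : Tendsto v atTop (nhds q) := by
    have := (tendsto_const_nhds (x := C)).rpow
      (tendsto_one_div_atTop_nhds_zero_nat (𝕜 := ℝ)) (.inl hC.ne')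
    simpa only [Real.rpow_zero, one_mul] using this.mul_const q
  have le_root : ∀ᶠ k : ℕ in atTop, u k * v k ≤ entryNorm (B ^ k) ^ ((1 : ℝ) / k) := by
    filter_upwards [eventually_ne_atTop 0] with k hk
    calc u k * v k = (C * q ^ k * entryNorm (A ^ k)) ^ ((1 : ℝ) / k) := by
          rw [Real.mul_rpow (by positivity) (entryNorm_nonneg _),
            Real.mul_rpow hC.le (by positivity), one_div, Real.pow_rpow_inv_natCast hq hk,
            ← one_div, mul_comm]
      _ ≤ _ := Real.rpow_le_rpow
          (mul_nonneg (by positivity) (entryNorm_nonneg _)) (h k) (by positivity)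
  calc q * specRad A = limsup u atTop * liminf v atTop := by
        rw [v_tendsto.liminf_eq, mul_comm]
        rfl
    _ ≤ limsup (u * v) atTop :=
        le_limsup_mul (.of_forall u_nonneg) (isBoundedUnder_entryNorm_pow_rpow A)
          (.of_forall v_nonneg) v_tendsto.isBoundedUnder_le
    _ ≤ specRad B :=
        limsup_le_limsup le_root
          (.of_frequently_ge (a := 0) (.of_forall fun k => mul_nonneg (u_nonneg k) (v_nonneg k)))
          (isBoundedUnder_entryNorm_pow_rpow B)

theorem pow_apply_self_le {A : Matrix n n ℝ} (hA : ∀ i j, 0 ≤ A i j) (i : n) (k : ℕ) :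
    A i i ^ k ≤ (A ^ k) i i := by
  induction k with
  | zero => simp only [pow_zero, Matrix.one_apply_eq, le_refl]
  | succ k ih =>
    calc A i i ^ (k + 1) ≤ (A ^ k) i i * A i i := by
          rw [pow_succ]
          exact mul_le_mul_of_nonneg_right ih (hA i i)
      _ ≤ ∑ j, (A ^ k) i j * A j i :=
          single_le_sum (f := fun j => (A ^ k) i j * A j i)
            (fun j _ => mul_nonneg (Matrix.pow_apply_nonneg hA k i j) (hA j i)) (mem_univ i)
      _ = (A ^ (k + 1)) i i := by rw [pow_succ, Matrix.mul_apply]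

theorem pow_apply_self_rpow_le_specRad {A : Matrix n n ℝ} (hA : ∀ i j, 0 ≤ A i j) (i : n)
    {N : ℕ} (hN : N ≠ 0) : (A ^ N) i i ^ ((1 : ℝ) / N) ≤ specRad A := by
  have diag_nonneg : 0 ≤ (A ^ N) i i := Matrix.pow_apply_nonneg hA N i i
  have le_root {k : ℕ} (hk : k ≠ 0) :
      (A ^ N) i i ^ ((1 : ℝ) / N) ≤ entryNorm (A ^ (N * k)) ^ ((1 : ℝ) / (N * k : ℕ)) :=
    calc (A ^ N) i i ^ ((1 : ℝ) / N)
        = ((A ^ N) i i ^ k) ^ ((1 : ℝ) / (N * k : ℕ)) := by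
          rw [← Real.rpow_natCast, ← Real.rpow_mul diag_nonneg]
          push_cast
          field_simp
      _ ≤ entryNorm (A ^ (N * k)) ^ ((1 : ℝ) / (N * k : ℕ)) := by
          rw [pow_mul]
          gcongr
          exact (pow_apply_self_le (Matrix.pow_apply_nonneg hA N) i k).trans
            ((le_abs_self _).trans (abs_apply_le_entryNorm _ i i))
  refine le_limsup_of_frequently_le (frequently_atTop.2 fun K => ?_)
    (isBoundedUnder_entryNorm_pow_rpow A)
  exact ⟨N * (K + 1), by nlinarith [Nat.pos_of_ne_zero hN], le_root K.succ_ne_zero⟩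

end SpectralRadius

section RealFunctions

variable {f : ℝ → ℝ} {c K : ℝ}

theorem strictMono_and_surjective_of_slope_bounds (hc : 0 < c)
    (lower : ∀ x y, x ≤ y → c * (y - x) ≤ f y - f x)
    (upper : ∀ x y, x ≤ y → f y - f x ≤ K * (y - x)) :
    StrictMono f ∧ Function.Surjective f := by
  have mono : StrictMono f := fun x y hxy =>
    sub_pos.1 ((mul_pos hc (sub_pos.2 hxy)).trans_le (lower x y hxy.le))
  have lipschitz : LipschitzWith K.toNNReal f := by
    refine .of_le_add_mul' K fun x y => ?_
    rcases le_total x y with hxy | hyx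
    · have := upper x y hxy
      rw [dist_comm, Real.dist_eq, abs_of_nonneg (sub_nonneg.2 hxy)]
      linarith [mono.monotone hxy]
    · have := upper y x hyx
      rw [Real.dist_eq, abs_of_nonneg (sub_nonneg.2 hyx)]
      linarith
  have tendsto_atTop : Tendsto f atTop atTop := by
    refine tendsto_atTop_mono' atTop ?_
      (tendsto_atTop_add_const_left _ (f 0) (tendsto_id.const_mul_atTop hc))
    filter_upwards [eventually_ge_atTop 0] with x hx
    have := lower 0 x hx
    simp only [id_eq]
    linarith
  have tendsto_atBot : Tendsto f atBot atBot := by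
    refine tendsto_atBot_mono' atBot ?_
      (tendsto_atBot_add_const_left _ (f 0) (tendsto_id.const_mul_atBot hc))
    filter_upwards [eventually_le_atBot 0] with x hx
    have := lower x 0 hx
    simp only [id_eq]
    linarith
  exact ⟨mono, lipschitz.continuous.surjective tendsto_atTop tendsto_atBot⟩

theorem exists_neg_crossing_one (hc : 0 < c) (h0 : 1 < f 0)
    (lower : ∀ x y, x ≤ y → Real.exp (c * (y - x)) * f x ≤ f y)
    (upper : ∀ x y, x ≤ y → f y ≤ Real.exp (K * (y - x)) * f x) :
    ∃ x₀ < 0, f x₀ = 1 ∧ (∀ x, f x = 1 → x = x₀) ∧ ∀ x, f x < 1 ↔ x < x₀ := by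
  have pos (x : ℝ) : 0 < f x := by
    rcases le_total 0 x with hx | hx
    · exact (mul_pos (Real.exp_pos _) (by linarith)).trans_le (lower 0 x hx)
    · exact pos_of_mul_pos_right ((by linarith : 0 < f 0).trans_le (upper x 0 hx))
        (Real.exp_pos _).le
  have log_exp_mul (a x : ℝ) : Real.log (Real.exp a * f x) = a + Real.log (f x) := by
    rw [Real.log_mul (Real.exp_pos a).ne' (pos x).ne', Real.log_exp]
  obtain ⟨log_mono, log_surj⟩ :
      StrictMono (Real.log ∘ f) ∧ Function.Surjective (Real.log ∘ f) := by
    refine strictMono_and_surjective_of_slope_bounds hc (K := K) (fun x y hxy => ?_)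
      fun x y hxy => ?_
    · have := Real.log_le_log (mul_pos (Real.exp_pos _) (pos x)) (lower x y hxy)
      rw [log_exp_mul] at this
      exact le_sub_iff_add_le.2 this
    · have := Real.log_le_log (pos y) (upper x y hxy)
      rw [log_exp_mul] at this
      exact sub_le_iff_le_add.2 this
  have mono : StrictMono f := fun x y hxy => (Real.log_lt_log_iff (pos x) (pos y)).1 (log_mono hxy)
  obtain ⟨x₀, hx₀⟩ := log_surj 0
  have eq_one : f x₀ = 1 := Real.eq_one_of_pos_of_log_eq_zero (pos x₀) hx₀
  refine ⟨x₀, mono.lt_iff_lt.1 (eq_one ▸ h0), eq_one, fun x hx => ?_, fun x => ?_⟩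
  · exact mono.injective (hx.trans eq_one.symm)
  · rw [← eq_one, mono.lt_iff_lt]

end RealFunctions

section Walks

variable {src rng : E → V}

/-- `IsWalk src rng v μ w`: the list of edges `μ` is a path from `v` to `w`. Unlike `ChainOK`, this
keeps track of the endpoints, so that the path of length `0` at each vertex is covered. -/
def IsWalk (src rng : E → V) : V → List E → V → Prop
  | v, [], w => v = w
  | v, e :: μ, w => src e = v ∧ IsWalk src rng (rng e) μ w

theorem chainOK_iff_isChain {μ : List E} :
    ChainOK src rng μ ↔ μ.IsChain fun e f => rng e = src f :=
  .rfl

theorem isWalk_append {v w : V} {μ ν : List E} :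
    IsWalk src rng v (μ ++ ν) w ↔ ∃ u, IsWalk src rng v μ u ∧ IsWalk src rng u ν w := by
  induction μ generalizing v with
  | nil => simp only [List.nil_append, IsWalk, exists_eq_left']
  | cons e μ ih => simp only [List.cons_append, IsWalk, ih, and_assoc, exists_and_left]

theorem isWalk_iff_of_ne_nil {v w : V} {μ : List E} (hμ : μ ≠ []) :
    IsWalk src rng v μ w ↔
      ChainOK src rng μ ∧ src (μ.head hμ) = v ∧ rng (μ.getLast hμ) = w := by
  induction μ generalizing v with
  | nil => exact absurd rfl hμ
  | cons e μ ih =>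
    cases μ with
    | nil => simp [IsWalk, chainOK_iff_isChain]
    | cons f μ =>
      rw [IsWalk, ih (List.cons_ne_nil f μ)]
      simp only [chainOK_iff_isChain, List.isChain_cons_cons, List.head_cons,
        List.getLast_cons (List.cons_ne_nil f μ), eq_comm (a := src f)]
      tauto

theorem isLoop_iff {μ : List E} : IsLoop src rng μ ↔ μ ≠ [] ∧ ∃ v, IsWalk src rng v μ v := by
  refine ⟨fun ⟨hμ, chain, closed⟩ => ⟨hμ, _, (isWalk_iff_of_ne_nil hμ).2 ⟨chain, rfl, closed.symm⟩⟩,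
    fun ⟨hμ, v, walk⟩ => ?_⟩
  obtain ⟨chain, start, finish⟩ := (isWalk_iff_of_ne_nil hμ).1 walk
  exact ⟨hμ, chain, start.trans finish.symm⟩

theorem gReaches_iff {v w : V} : GReaches src rng v w ↔ ∃ μ, IsWalk src rng v μ w := by
  constructor
  · rintro (rfl | ⟨μ, hμ, walk⟩)
    · exact ⟨[], rfl⟩
    · exact ⟨μ, (isWalk_iff_of_ne_nil hμ).2 walk⟩
  · rintro ⟨μ, walk⟩
    rcases eq_or_ne μ [] with rfl | hμ
    · exact .inl walk
    · exact .inr ⟨μ, hμ, (isWalk_iff_of_ne_nil hμ).1 walk⟩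

theorem GReaches.trans {u v w : V} (huv : GReaches src rng u v) (hvw : GReaches src rng v w) :
    GReaches src rng u w := by
  rw [gReaches_iff] at *
  obtain ⟨μ, hμ⟩ := huv
  obtain ⟨ν, hν⟩ := hvw
  exact ⟨μ ++ ν, isWalk_append.2 ⟨v, hμ, hν⟩⟩

theorem gReaches_edge (e : E) : GReaches src rng (src e) (rng e) :=
  gReaches_iff.2 ⟨[e], rfl, rfl⟩

theorem IsWalk.rng_mem_map_src_or_eq {v w : V} {μ : List E} (h : IsWalk src rng v μ w) {e : E}
    (he : e ∈ μ) : rng e ∈ μ.map src ∨ rng e = w := by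
  obtain ⟨a, b, rfl⟩ := List.append_of_mem he
  obtain ⟨-, -, -, h⟩ := isWalk_append.1 h
  cases b with
  | nil => exact .inr h
  | cons f b => exact .inl (h.1 ▸ List.mem_map_of_mem (by simp))

theorem IsWalk.exists_simple_loop_split {v w : V} {μ : List E} (h : IsWalk src rng v μ w)
    (hμ : ¬ (μ.map src).Nodup) :
    ∃ a b d u, μ = a ++ (b ++ d) ∧ b ≠ [] ∧ (b.map src).Nodup ∧
      IsWalk src rng v a u ∧ IsWalk src rng u b u ∧ IsWalk src rng u d w := by
  induction μ generalizing v with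
  | nil => exact absurd List.nodup_nil hμ
  | cons e μ ih =>
    obtain ⟨rfl, h⟩ := h
    by_cases tail_nodup : (μ.map src).Nodup
    · have src_mem : src e ∈ μ.map src := by
        by_contra he
        exact hμ (List.nodup_cons.2 ⟨he, tail_nodup⟩)
      obtain ⟨f, hf, src_eq⟩ := List.mem_map.1 src_mem
      obtain ⟨b, d, rfl⟩ := List.append_of_mem hf
      obtain ⟨u, hb, rfl, hd⟩ := isWalk_append.1 h
      rw [List.map_append, List.map_cons, List.nodup_middle, List.nodup_cons,
        List.mem_append, not_or] at tail_nodup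
      refine ⟨[], e :: b, f :: d, src e, rfl, List.cons_ne_nil e b, ?_, rfl, ⟨rfl, src_eq ▸ hb⟩,
        src_eq, hd⟩
      exact List.nodup_cons.2 ⟨src_eq ▸ tail_nodup.1.1, tail_nodup.2.of_append_left⟩
    · obtain ⟨a, b, d, u, rfl, hb, b_nodup, ha, hbu, hd⟩ := ih h tail_nodup
      exact ⟨e :: a, b, d, u, rfl, hb, b_nodup, ⟨rfl, ha⟩, hbu, hd⟩

theorem IsLoop.exists_simple {μ : List E} (h : IsLoop src rng μ) :
    ∃ ν, IsLoop src rng ν ∧ (ν.map src).Nodup := by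
  by_cases hμ : (μ.map src).Nodup
  · exact ⟨μ, h, hμ⟩
  · obtain ⟨-, v, walk⟩ := isLoop_iff.1 h
    obtain ⟨-, b, -, u, -, hb, b_nodup, -, hbu, -⟩ := walk.exists_simple_loop_split hμ
    exact ⟨b, isLoop_iff.2 ⟨hb, u, hbu⟩, b_nodup⟩

theorem exists_circularWitness_of_injective (hconn : ∀ v w, GReaches src rng v w)
    (hsrc : Function.Injective src) {μ : List E} (hμ : IsLoop src rng μ) :
    ∃ ν, CircularWitness src rng Set.univ ν := by
  obtain ⟨ν, loop, nodup⟩ := hμ.exists_simple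
  obtain ⟨hν, v, walk⟩ := isLoop_iff.1 loop
  have start_mem : v ∈ ν.map src := by
    rw [← ((isWalk_iff_of_ne_nil hν).1 walk).2.1]
    exact List.mem_map_of_mem (List.head_mem hν)
  have mem_of_src_mem {e : E} (he : src e ∈ ν.map src) : e ∈ ν :=
    (List.mem_map_of_injective hsrc).1 he
  have rng_mem {e : E} (he : e ∈ ν) : rng e ∈ ν.map src :=
    (walk.rng_mem_map_src_or_eq he).elim id (· ▸ start_mem)
  have walk_stays (κ : List E) (x y : V) (hκ : IsWalk src rng x κ y) (hx : x ∈ ν.map src) :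
      y ∈ ν.map src := by
    induction κ generalizing x with
    | nil => exact hκ ▸ hx
    | cons e κ ih => exact ih (rng e) hκ.2 (rng_mem (mem_of_src_mem (hκ.1 ▸ hx)))
  have mem_all (x : V) : x ∈ ν.map src := by
    obtain ⟨κ, hκ⟩ := gReaches_iff.1 (hconn v x)
    exact walk_stays κ v x hκ start_mem
  exact ⟨ν, ⟨loop, fun _ _ => ⟨trivial, trivial⟩⟩, nodup, fun x _ => mem_all x,
    fun e _ _ => mem_of_src_mem (mem_all (src e))⟩

theorem exists_distinct_closed_walks (hconn : ∀ v w, GReaches src rng v w)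
    (hsrc : ¬ Function.Injective src) :
    ∃ v μ ν, μ ≠ ν ∧ μ ≠ [] ∧ μ.length = ν.length ∧
      IsWalk src rng v μ v ∧ IsWalk src rng v ν v := by
  obtain ⟨e, f, src_eq, hef⟩ : ∃ e f, src e = src f ∧ e ≠ f := by
    simpa only [Function.Injective, not_forall, exists_prop] using hsrc
  obtain ⟨p, hp⟩ := gReaches_iff.1 (hconn (rng e) (src e))
  obtain ⟨q, hq⟩ := gReaches_iff.1 (hconn (rng f) (src e))
  have loop_e : IsWalk src rng (src e) (e :: p) (src e) := ⟨rfl, hp⟩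
  have loop_f : IsWalk src rng (src e) (f :: q) (src e) := ⟨src_eq.symm, hq⟩
  refine ⟨src e, (e :: p) ++ (f :: q), (f :: q) ++ (e :: p), ?_, List.cons_ne_nil _ _, ?_,
    isWalk_append.2 ⟨_, loop_e, loop_f⟩, isWalk_append.2 ⟨_, loop_f, loop_e⟩⟩
  · exact fun h => hef (List.cons.inj h).1
  · simp only [List.length_append, Nat.add_comm]

theorem fpath_append (F : E → ℝ) (μ ν : List E) : Fpath F (μ ++ ν) = Fpath F μ + Fpath F ν := by
  simp only [Fpath, List.map_append, List.sum_append]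

theorem mul_length_le_fpath {F : E → ℝ} {K : ℝ} (hK : ∀ e, K ≤ F e) (μ : List E) :
    K * μ.length ≤ Fpath F μ := by
  induction μ with
  | nil => simp [Fpath]
  | cons e μ ih =>
    simp only [Fpath, List.map_cons, List.sum_cons, List.length_cons, Nat.cast_succ] at ih ⊢
    linarith [hK e]

theorem finite_setOf_nodup_map_src [Finite E] (src : E → V) :
    {μ : List E | (μ.map src).Nodup}.Finite := by
  have := Fintype.ofFinite E
  exact (List.finite_length_le E (Fintype.card E)).subset fun _ hμ =>
    (List.Nodup.of_map src hμ).length_le_card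

open scoped Topology in
theorem exists_pos_forall_simple_loop_fpath_add_lt [Finite E] {F : E → ℝ}
    (hF : ∀ μ, IsLoop src rng μ → Fpath F μ < 0) :
    ∃ c > 0, ∀ μ : List E, (μ.map src).Nodup → IsLoop src rng μ → Fpath F μ + c * μ.length < 0 := by
  have near_zero : ∀ᶠ c : ℝ in 𝓝[>] 0, ∀ μ : List E, (μ.map src).Nodup →
      IsLoop src rng μ → Fpath F μ + c * μ.length < 0 := by
    refine nhdsWithin_le_nhds ((finite_setOf_nodup_map_src src).eventually_all.2 fun μ _ => ?_)
    refine eventually_imp_distrib_left.2 fun loop => ?_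
    have cont : Continuous fun c : ℝ => Fpath F μ + c * μ.length := by fun_prop
    exact (cont.tendsto 0).eventually_lt_const (by simpa using hF μ loop)
  exact (eventually_mem_nhdsWithin.and near_zero).exists

theorem exists_fpath_add_mul_length_le [Finite E] {F : E → ℝ}
    (hF : ∀ μ, IsLoop src rng μ → Fpath F μ < 0) :
    ∃ c > 0, ∃ B, ∀ v μ w, IsWalk src rng v μ w → Fpath F μ + c * μ.length ≤ B := by
  obtain ⟨c, hc, simple_loop⟩ := exists_pos_forall_simple_loop_fpath_add_lt hF
  obtain ⟨B, hB⟩ :=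
    ((finite_setOf_nodup_map_src src).image fun μ => Fpath F μ + c * μ.length).bddAbove
  refine ⟨c, hc, B, fun v μ w walk => ?_⟩
  induction hn : μ.length using Nat.strong_induction_on generalizing μ with | _ n ih
  subst hn
  by_cases nodup : (μ.map src).Nodup
  · exact hB ⟨μ, nodup, rfl⟩
  · obtain ⟨a, b, d, u, rfl, hb, b_nodup, ha, hbu, hd⟩ := walk.exists_simple_loop_split nodup
    have loop_neg := simple_loop b b_nodup (isLoop_iff.2 ⟨hb, u, hbu⟩)
    have shorter : (a ++ d).length < (a ++ (b ++ d)).length := by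
      have := List.length_pos_iff.2 hb
      simp only [List.length_append]
      lia
    have rest := ih _ shorter (a ++ d) (isWalk_append.2 ⟨u, ha, hd⟩) rfl
    simp only [fpath_append, List.length_append, Nat.cast_add] at rest ⊢
    linarith

end Walks

section WalkExpansion

variable [DecidableEq V] [Fintype E] {src rng : E → V} {F : E → ℝ} {β β' : ℝ}

theorem amat_nonneg (F : E → ℝ) (β : ℝ) (v w : V) : 0 ≤ Amat src rng F β v w :=
  sum_nonneg fun _ _ => (Real.exp_pos _).le

variable [Fintype V]

open Classical in
theorem amat_pow_apply (F : E → ℝ) (β : ℝ) (k : ℕ) (v w : V) :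
    (Amat src rng F β ^ k) v w =
      ∑ μ : Fin k → E with IsWalk src rng v (List.ofFn μ) w,
        Real.exp (-β * Fpath F (List.ofFn μ)) := by
  induction k generalizing v with
  | zero => by_cases hvw : v = w <;> simp [IsWalk, Fpath, hvw]
  | succ k ih =>
    simp only [pow_succ', Matrix.mul_apply, ih, Amat]
    rw [sum_filter, ← (Fin.consEquiv fun _ => E).sum_comp, Fintype.sum_prod_type]
    simp only [sum_filter, sum_mul_sum]
    rw [sum_comm]
    refine sum_congr rfl fun e _ => ?_
    rw [sum_comm]
    refine sum_congr rfl fun μ _ => ?_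
    by_cases he : src e = v
    · rw [Fintype.sum_eq_single (rng e) fun u hu => by simp [hu.symm]]
      simp [IsWalk, Fpath, he, mul_add, Real.exp_add]
    · simp [IsWalk, he]

theorem exp_mul_amat_pow_apply_le {a : ℝ} {k : ℕ} {v w : V}
    (h : ∀ μ, μ.length = k → IsWalk src rng v μ w → a ≤ (β - β') * Fpath F μ) :
    Real.exp a * (Amat src rng F β ^ k) v w ≤ (Amat src rng F β' ^ k) v w := by
  classical
  simp only [amat_pow_apply, mul_sum, ← Real.exp_add]
  gcongr with μ hμ
  linarith [h _ (List.length_ofFn) (mem_filter.1 hμ).2]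

theorem exp_mul_specRad_amat_le {c L : ℝ}
    (h : ∀ v μ w, IsWalk src rng v μ w → c * μ.length - L ≤ (β - β') * Fpath F μ) :
    Real.exp c * specRad (Amat src rng F β) ≤ specRad (Amat src rng F β') := by
  refine mul_specRad_le (Real.exp_pos (-L)) (Real.exp_pos c).le fun k => ?_
  rw [← Real.exp_nat_mul, ← Real.exp_add, entryNorm, entryNorm, mul_sum]
  gcongr with v
  rw [mul_sum]
  gcongr with w
  rw [abs_of_nonneg (Matrix.pow_apply_nonneg (amat_nonneg F β) k v w),
    abs_of_nonneg (Matrix.pow_apply_nonneg (amat_nonneg F β') k v w)]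
  refine exp_mul_amat_pow_apply_le fun μ hμ walk => ?_
  linarith [hμ ▸ h v μ w walk]

theorem two_le_amat_zero_pow_apply {v w : V} {μ ν : List E} (hne : μ ≠ ν)
    (hlen : μ.length = ν.length) (hμ : IsWalk src rng v μ w) (hν : IsWalk src rng v ν w) :
    2 ≤ (Amat src rng F 0 ^ μ.length) v w := by
  classical
  obtain ⟨k, μ, rfl⟩ : ∃ k, ∃ f : Fin k → E, List.ofFn f = μ := ⟨_, μ.get, List.ofFn_get μ⟩
  obtain rfl : k = ν.length := by rw [← hlen, List.length_ofFn]
  rw [List.length_ofFn, amat_pow_apply]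
  simp only [neg_zero, zero_mul, Real.exp_zero, sum_const, nsmul_eq_mul, mul_one]
  have one_lt_card : 1 < #{κ : Fin ν.length → E | IsWalk src rng v (List.ofFn κ) w} :=
    one_lt_card.2 ⟨μ, by simpa using hμ, ν.get, by simpa using hν, fun h => hne (by simp [h])⟩
  exact_mod_cast one_lt_card

theorem one_lt_specRad_amat_zero (F : E → ℝ) (hconn : ∀ v w, GReaches src rng v w)
    (hsrc : ¬ Function.Injective src) : 1 < specRad (Amat src rng F 0) := by
  obtain ⟨v, μ, ν, hne, hμ, hlen, walk_μ, walk_ν⟩ := exists_distinct_closed_walks hconn hsrc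
  have two_le : 2 ≤ (Amat src rng F 0 ^ μ.length) v v :=
    two_le_amat_zero_pow_apply hne hlen walk_μ walk_ν
  have length_pos := List.length_pos_iff.2 hμ
  calc 1 < (Amat src rng F 0 ^ μ.length) v v ^ ((1 : ℝ) / μ.length) :=
        Real.one_lt_rpow (by linarith) (by positivity)
    _ ≤ specRad (Amat src rng F 0) :=
        pow_apply_self_rpow_le_specRad (amat_nonneg F 0) v length_pos.ne'

theorem exists_specRad_amat_eq_one (hF : ∀ μ, IsLoop src rng μ → Fpath F μ < 0)
    (h0 : 1 < specRad (Amat src rng F 0)) :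
    ∃ β₀ < 0, specRad (Amat src rng F β₀) = 1 ∧
      (∀ β, specRad (Amat src rng F β) = 1 → β = β₀) ∧
      ∀ β, specRad (Amat src rng F β) < 1 ↔ β < β₀ := by
  obtain ⟨c, hc, B, hB⟩ := exists_fpath_add_mul_length_le hF
  obtain ⟨K, hK⟩ := (Set.finite_range F).bddBelow
  refine exists_neg_crossing_one (f := fun β => specRad (Amat src rng F β)) (K := -K) hc h0
    (fun β β' hβ => ?_) fun β β' hβ => ?_
  · refine exp_mul_specRad_amat_le (L := (β' - β) * B) fun v μ w walk => ?_
    linarith [mul_le_mul_of_nonneg_left (hB v μ w walk) (sub_nonneg.2 hβ)]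
  · have inverse : Real.exp (K * (β' - β)) * specRad (Amat src rng F β') ≤
        specRad (Amat src rng F β) := by
      refine exp_mul_specRad_amat_le (L := 0) fun v μ w _ => ?_
      linarith [mul_le_mul_of_nonneg_left
        (mul_length_le_fpath (fun e => hK ⟨e, rfl⟩) μ) (sub_nonneg.2 hβ)]
    rwa [neg_mul, Real.exp_neg, ← div_eq_inv_mul, le_div_iff₀' (Real.exp_pos _)]

end WalkExpansion

section Restriction

variable (src rng : E → V) (C : Set V)

/-- The edges of the full subgraph on the vertex set `C`, i.e. those with both endpoints in `C`. -/
abbrev EdgeIn : Type _ := {e : E // src e ∈ C ∧ rng e ∈ C}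

/-- The source map of the full subgraph on `C`. -/
def srcIn (e : EdgeIn src rng C) : C := ⟨src e, e.2.1⟩

/-- The range map of the full subgraph on `C`. -/
def rngIn (e : EdgeIn src rng C) : C := ⟨rng e, e.2.2⟩

variable {src rng C}

theorem loopIn_map_val_iff {μ : List (EdgeIn src rng C)} :
    LoopIn src rng C (μ.map Subtype.val) ↔ IsLoop (srcIn src rng C) (rngIn src rng C) μ := by
  simp only [LoopIn, IsLoop, chainOK_iff_isChain, List.isChain_map, ne_eq, List.map_eq_nil_iff,
    List.head_map, List.getLast_map, srcIn, rngIn, Subtype.mk.injEq]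
  refine and_iff_left fun e he => ?_
  obtain ⟨e, -, rfl⟩ := List.mem_map.1 he
  exact e.2

theorem CircularWitness.map_val {μ : List (EdgeIn src rng C)}
    (h : CircularWitness (srcIn src rng C) (rngIn src rng C) Set.univ μ) :
    CircularWitness src rng C (μ.map Subtype.val) := by
  obtain ⟨⟨loop, -⟩, nodup, vertices, edges⟩ := h
  have map_src : (μ.map Subtype.val).map src = (μ.map (srcIn src rng C)).map Subtype.val := by
    simp only [List.map_map]
    rfl
  refine ⟨loopIn_map_val_iff.2 loop, ?_, fun v hv => ?_, fun e hs hr => ?_⟩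
  · exact map_src ▸ nodup.map Subtype.val_injective
  · exact map_src ▸ List.mem_map_of_mem (vertices ⟨v, hv⟩ trivial)
  · exact List.mem_map_of_mem (edges ⟨e, hs, hr⟩ trivial trivial)

theorem GIsComponent.gReaches_restrict (hC : GIsComponent src rng C) (v w : C) :
    GReaches (srcIn src rng C) (rngIn src rng C) v w := by
  obtain ⟨⟨x, rfl⟩, -⟩ := hC
  obtain ⟨v, hv⟩ := v
  obtain ⟨w, hw⟩ := w
  obtain ⟨μ, walk⟩ := gReaches_iff.1 (hv.2.trans hw.1)
  induction μ generalizing v with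
  | nil => exact .inl (Subtype.ext walk)
  | cons e μ ih =>
    obtain ⟨rfl, walk⟩ := walk
    have rng_mem : GReaches src rng x (rng e) ∧ GReaches src rng (rng e) x :=
      ⟨hv.1.trans (gReaches_edge e), (gReaches_iff.2 ⟨μ, walk⟩).trans hw.2⟩
    exact (gReaches_edge (src := srcIn src rng _) ⟨e, hv, rng_mem⟩).trans (ih _ rng_mem walk)

theorem GIsComponent.not_injective_srcIn (hC : GIsComponent src rng C)
    (hnc : ¬ IsCircular src rng C) : ¬ Function.Injective (srcIn src rng C) := by
  intro hsrc
  obtain ⟨μ, hμ⟩ := hC.2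
  lift μ to List (EdgeIn src rng C) using hμ.2
  obtain ⟨ν, hν⟩ :=
    exists_circularWitness_of_injective hC.gReaches_restrict hsrc (loopIn_map_val_iff.1 hμ)
  exact hnc ⟨hC, _, hν.map_val⟩

theorem amat_restrict [Fintype E] [DecidableEq V] [Fintype (EdgeIn src rng C)] [DecidableEq C]
    (F : E → ℝ) (β : ℝ) :
    Amat (srcIn src rng C) (rngIn src rng C) (F ∘ Subtype.val) β =
      (Amat src rng F β).submatrix ((↑) : C → V) (↑) := by
  ext v w
  refine sum_bij (fun e _ => e.1) ?_ ?_ ?_ ?_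
  · simp [srcIn, rngIn, Subtype.ext_iff]
  · exact fun e _ f _ h => Subtype.ext h
  · intro e he
    obtain ⟨hs, hr⟩ := (mem_filter.1 he).2
    exact ⟨⟨e, hs ▸ v.2, hr ▸ w.2⟩, mem_filter.2 ⟨mem_univ _, Subtype.ext hs, Subtype.ext hr⟩, rfl⟩
  · exact fun e _ => rfl

theorem specRad_amat_restrict [Fintype V] [Fintype E] [DecidableEq V]
    [Fintype (EdgeIn src rng C)] [Fintype C] [DecidableEq C] (F : E → ℝ) (β : ℝ) :
    specRad (Amat (srcIn src rng C) (rngIn src rng C) (F ∘ Subtype.val) β) =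
      specRadOn (Amat src rng F β) C := by
  rw [amat_restrict]
  obtain rfl : ‹Fintype C› = (Set.toFinite C).fintype := Subsingleton.elim _ _
  obtain rfl : ‹DecidableEq C› = Classical.decEq C := Subsingleton.elim _ _
  rfl

end Restriction

/-- For a non-circular component `C` all of whose loops satisfy `F(μ) < 0`, there is a
unique `β₀` with `ρ(A(β₀)^C) = 1`; it is negative, and `ρ(A(β)^C) < 1 ↔ β < β₀`. -/
theorem specRad_component_neg_type {V E : Type*} [Fintype V] [DecidableEq V] [Fintype E]
    (src rng : E → V) (F : E → ℝ)
    (C : Set V) (hC : GIsComponent src rng C) (hnc : ¬ IsCircular src rng C)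
    (hF : ∀ μ : List E, LoopIn src rng C μ → Fpath F μ < 0) :
    ∃ β₀ : ℝ, β₀ < 0 ∧ specRadOn (Amat src rng F β₀) C = 1 ∧
      (∀ β : ℝ, specRadOn (Amat src rng F β) C = 1 → β = β₀) ∧
      (∀ β : ℝ, specRadOn (Amat src rng F β) C < 1 ↔ β < β₀) := by
  have := Fintype.ofFinite C
  have := Fintype.ofFinite (EdgeIn src rng C)
  have one_lt : 1 < specRad (Amat (srcIn src rng C) (rngIn src rng C) (F ∘ Subtype.val) 0) :=
    one_lt_specRad_amat_zero _ hC.gReaches_restrict (hC.not_injective_srcIn hnc)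
  have loops_neg (μ : List (EdgeIn src rng C)) (hμ : IsLoop (srcIn src rng C) (rngIn src rng C) μ) :
      Fpath (F ∘ Subtype.val) μ < 0 := by
    simpa only [Fpath, List.map_map] using hF _ (loopIn_map_val_iff.2 hμ)
  simpa only [specRad_amat_restrict] using exists_specRad_amat_eq_one loops_neg one_lt
end
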